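/- Let L (labels) and E (items) be finite types with L nonempty, let f : L → Finset E, let m, k, n be natural numbers with m ≥ 1, and fix targets j : L → Fin k → Fin m. Under the uniform probability distribution on the finite set of all functions h : (L × E) → Fin k → (Fin (n·k) → Fin m), the expected value of the random quantity (1/card L) · Σ_{l ∈ L} card {e ∈ E \ f l | for every i ∈ Fin k, the target j l i lies in the range of h (l, e) i} equals (Σ_{l ∈ L} (card (E \ f l)) · (1 - (1 - 1/m)^{n·k})^k) / (card L). -/

import Mathlib

theorem bm_avg_coord {α β : Type*} [Fintype α] [DecidableEq α] [Fintype β] [Nonempty β]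
    (x : α) (g : β → ℝ) :
    ∑ h : α → β, g (h x) = (Fintype.card (α → β) : ℝ) * ((∑ b, g b) / Fintype.card β) := by
  have hc : (Fintype.card β : ℝ) ≠ 0 := by
    exact_mod_cast Fintype.card_ne_zero
  have h1 := Finset.prod_univ_sum (fun _ : α => (Finset.univ : Finset β))
    (fun y b => if y = x then g b else (1 : ℝ))
  rw [Fintype.piFinset_univ] at h1
  have h2 : ∀ h : α → β, ∏ y, (if y = x then g (h y) else (1 : ℝ)) = g (h x) := by
    intro h
    rw [Finset.prod_ite_eq' Finset.univ x (fun y => g (h y))]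
    simp
  simp only [h2] at h1
  rw [← h1, ← Finset.mul_prod_erase Finset.univ _ (Finset.mem_univ x)]
  have h3 : ∏ y ∈ Finset.univ.erase x, (∑ b : β, if y = x then g b else (1 : ℝ))
      = (Fintype.card β : ℝ) ^ (Fintype.card α - 1) := by
    rw [Finset.prod_congr rfl (g := fun _ => (Fintype.card β : ℝ))]
    · simp [Finset.card_erase_of_mem]
    · intro y hy
      simp [Finset.ne_of_mem_erase hy]
  rw [h3]
  have h4 : Fintype.card α = (Fintype.card α - 1) + 1 := by
    have : 0 < Fintype.card α := Fintype.card_pos_iff.mpr ⟨x⟩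
    omega
  have h5 : (Fintype.card (α → β) : ℝ)
      = (Fintype.card β : ℝ) ^ (Fintype.card α - 1) * Fintype.card β := by
    rw [Fintype.card_fun, ← pow_succ, ← h4]; push_cast; rfl
  rw [h5]
  simp only [if_true]
  field_simp

theorem bm_all {ι γ : Type*} [Fintype ι] [DecidableEq ι] [Fintype γ]
    (P : ι → γ → Prop) [∀ i c, Decidable (P i c)] [∀ b : ι → γ, Decidable (∀ i, P i (b i))] :
    ∑ b : ι → γ, (if ∀ i, P i (b i) then (1 : ℝ) else 0)
      = ∏ i, ∑ c, if P i c then (1 : ℝ) else 0 := by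
  rw [Finset.prod_univ_sum, Fintype.piFinset_univ]
  refine Finset.sum_congr rfl fun b _ => ?_
  rw [Finset.prod_ite_zero]
  simp

theorem bm_hit (N m : ℕ) (hm : 1 ≤ m) (t : Fin m) :
    ∑ c : Fin N → Fin m, (if ∃ a, c a = t then (1 : ℝ) else 0)
      = (m : ℝ) ^ N * (1 - (1 - 1 / (m : ℝ)) ^ N) := by
  have h0 : (m : ℝ) ≠ 0 := by positivity
  have h1 := bm_all (fun (_ : Fin N) (c : Fin m) => ¬ c = t)
  have h2 : ∑ c : Fin m, (if ¬ c = t then (1 : ℝ) else 0) = m - 1 := by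
    have : ∀ c : Fin m, (if ¬ c = t then (1 : ℝ) else 0) = 1 - if c = t then 1 else 0 := by
      intro c; split_ifs <;> simp_all
    simp only [this, Finset.sum_sub_distrib]
    simp
  have h3 : ∀ c : Fin N → Fin m, (if ∃ a, c a = t then (1 : ℝ) else 0)
      = 1 - if ∀ a, ¬ c a = t then 1 else 0 := by
    intro c
    by_cases h : ∃ a, c a = t
    · have h' : ¬ ∀ a, ¬ c a = t := by push Not; exact h
      rw [if_pos h, if_neg h']; simp
    · have h' : ∀ a, ¬ c a = t := by push Not at h; exact h
      rw [if_neg h, if_pos h']; simp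
  simp only [h3, Finset.sum_sub_distrib]
  rw [h1, h2, mul_sub, ← mul_pow]
  have : (m : ℝ) * (1 - 1 / m) = m - 1 := by field_simp
  rw [this]
  simp

/-- The average false positive rate of a Bloom Matrix over a set of labels `L`:
the expected value of `(1/|L|) · Σ_l |{e ∈ E \ f l | ∀ i, j l i ∈ range (h (l,e) i)}|`
equals `(Σ_l |E \ f l| · (1 - (1 - 1/m)^{n·k})^k) / |L|`. -/
theorem bloom_matrix_avg_fp_rate (L E : Type*) [Fintype L] [DecidableEq L] [Nonempty L] [Fintype E]
    [DecidableEq E] (f : L → Finset E) (m k n : ℕ) (hm : 1 ≤ m)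
    (j : L → Fin k → Fin m) :
    ∑ h : L × E → Fin k → (Fin (n * k) → Fin m),
        (1 / (Fintype.card (L × E → Fin k → (Fin (n * k) → Fin m)) : ℝ)) *
          ((1 / (Fintype.card L : ℝ)) * ∑ l : L,
            (((Finset.univ \ f l).filter
                (fun e : E => ∀ i : Fin k, ∃ a, h (l, e) i a = j l i)).card : ℝ)) =
      (∑ l : L, ((Finset.univ \ f l).card : ℝ) * (1 - (1 - 1 / (m : ℝ)) ^ (n * k)) ^ k) /
        (Fintype.card L : ℝ) := by
  have hm0 : (m : ℝ) ≠ 0 := by positivity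
  have : Nonempty (Fin m) := ⟨⟨0, hm⟩⟩
  have hC : (Fintype.card (L × E → Fin k → (Fin (n * k) → Fin m)) : ℝ) ≠ 0 := by
    exact_mod_cast Fintype.card_ne_zero
  have key : ∀ (l : L) (e : E), ∑ h : L × E → Fin k → (Fin (n * k) → Fin m),
      (if ∀ i : Fin k, ∃ a, h (l, e) i a = j l i then (1 : ℝ) else 0)
      = (Fintype.card (L × E → Fin k → (Fin (n * k) → Fin m)) : ℝ)
        * (1 - (1 - 1 / (m : ℝ)) ^ (n * k)) ^ k := by
    intro l e
    rw [bm_avg_coord (l, e) (fun b : Fin k → (Fin (n * k) → Fin m) =>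
      if ∀ i : Fin k, ∃ a, b i a = j l i then (1 : ℝ) else 0)]
    rw [bm_all (fun (i : Fin k) (c : Fin (n * k) → Fin m) => ∃ a, c a = j l i)]
    simp only [bm_hit _ m hm]
    congr 1
    rw [Finset.prod_const, mul_pow]
    simp only [Finset.card_univ, Fintype.card_fin, Fintype.card_fun]
    push_cast
    field_simp
  rw [← Finset.mul_sum, ← Finset.mul_sum, Finset.sum_comm]
  have h2 : ∀ l : L, ∑ h : L × E → Fin k → (Fin (n * k) → Fin m),
      (((Finset.univ \ f l).filter
        (fun e : E => ∀ i : Fin k, ∃ a, h (l, e) i a = j l i)).card : ℝ)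
      = (Fintype.card (L × E → Fin k → (Fin (n * k) → Fin m)) : ℝ) *
        (((Finset.univ \ f l).card : ℝ) * (1 - (1 - 1 / (m : ℝ)) ^ (n * k)) ^ k) := by
    intro l
    simp only [Finset.card_filter, Nat.cast_sum, Nat.cast_ite, Nat.cast_one, Nat.cast_zero]
    rw [Finset.sum_comm]
    simp only [key]
    rw [Finset.sum_const, nsmul_eq_mul]
    ring
  simp only [h2]
  rw [← Finset.mul_sum]
  generalize (∑ l : L, ((Finset.univ \ f l).card : ℝ) * (1 - (1 - 1 / (m : ℝ)) ^ (n * k)) ^ k) = S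
  generalize (Fintype.card (L × E → Fin k → (Fin (n * k) → Fin m)) : ℝ) = C at hC
  field_simp
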